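/- The complexified operator Cα − iωDα is invertible, and the tensor of complex viscoelastic moduli C(ω) := (Cε − iωDε) − (Cm − iωDm)∘(Cα − iωDα)⁻¹∘(Cm − iωDm) admits the alternative representation C(ω) = C_I − iωD_I − Ĉᵀ∘(Cα − iωDα)⁻¹∘Ĉ. -/

import Mathlib

open scoped ComplexInnerProductSpace

section Defs

variable {V : Type*} [NormedAddCommGroup V] [InnerProductSpace ℂ V] [FiniteDimensional ℂ V]

/-- `Ĉ := Cm − Cα ∘ Dα⁻¹ ∘ Dm`. -/
noncomputable def Chat (Cα Cm Dα Dm : V →L[ℂ] V) : V →L[ℂ] V :=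
  Cm - Cα ∘L Ring.inverse Dα ∘L Dm

/-- The instantaneous elasticity tensor `C_I := Cε − Cm∘Cα⁻¹∘Cm + Ĉᵀ∘Cα⁻¹∘Ĉ`. -/
noncomputable def CInst (Cε Cα Cm Dα Dm : V →L[ℂ] V) : V →L[ℂ] V :=
  Cε - Cm ∘L Ring.inverse Cα ∘L Cm +
    ContinuousLinearMap.adjoint (Chat Cα Cm Dα Dm) ∘L Ring.inverse Cα ∘L Chat Cα Cm Dα Dm

/-- The instantaneous viscosity tensor `D_I := Dε − Dm∘Dα⁻¹∘Dm`. -/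
noncomputable def DInst (Dε Dα Dm : V →L[ℂ] V) : V →L[ℂ] V :=
  Dε - Dm ∘L Ring.inverse Dα ∘L Dm

/-- The tensor of complex viscoelastic moduli
`C(ω) := (Cε − iωDε) − (Cm − iωDm)∘(Cα − iωDα)⁻¹∘(Cm − iωDm)`. -/
noncomputable def Cfreq (Cε Cα Cm Dε Dα Dm : V →L[ℂ] V) (ω : ℝ) : V →L[ℂ] V :=
  (Cε - (Complex.I * (ω : ℂ)) • Dε) -
    (Cm - (Complex.I * (ω : ℂ)) • Dm) ∘L
      Ring.inverse (Cα - (Complex.I * (ω : ℂ)) • Dα) ∘L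
        (Cm - (Complex.I * (ω : ℂ)) • Dm)

end Defs

/-- An endomorphism of a finite-dimensional space whose quadratic form has positive real part
is invertible. -/
theorem ContinuousLinearMap.isUnit_of_re_inner_pos {V : Type*} [NormedAddCommGroup V]
    [InnerProductSpace ℂ V] [FiniteDimensional ℂ V] (T : V →L[ℂ] V)
    (hT : ∀ x : V, x ≠ 0 → 0 < (⟪T x, x⟫).re) : IsUnit T := by
  have hinj : Function.Injective (T : V →ₗ[ℂ] V) := by
    rw [← LinearMap.ker_eq_bot, LinearMap.ker_eq_bot']
    intro x hx
    by_contra hne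
    have hpos := hT x hne
    rw [show T x = 0 from hx] at hpos
    simp at hpos
  rw [ContinuousLinearMap.isUnit_iff_bijective]
  exact ⟨hinj, LinearMap.injective_iff_surjective.mp hinj⟩

/-- For self-adjoint `D`, the quadratic form of `C - iωD` has the same real part as that
of `C`. -/
theorem re_inner_sub_I_mul_smul {V : Type*} [NormedAddCommGroup V] [InnerProductSpace ℂ V]
    [CompleteSpace V] (C D : V →L[ℂ] V) (hD : IsSelfAdjoint D) (ω : ℝ) (x : V) :
    (⟪(C - (Complex.I * (ω : ℂ)) • D) x, x⟫).re = (⟪C x, x⟫).re := by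
  have him : (⟪D x, x⟫).im = 0 := hD.isSymmetric.im_inner_apply_self x
  simp [him]

/-- Expansion of a product sandwiching `s⁻¹` whose outer factors are shifted by multiples
of `s`. -/
theorem add_mul_mul_inverse_mul_add_mul {R : Type*} [Ring R] {s : R} (hs : IsUnit s)
    (b c p q : R) :
    (b + p * s) * (Ring.inverse s * (c + s * q)) =
      b * (Ring.inverse s * c) + b * q + p * c + p * (s * q) := by
  have hq : Ring.inverse s * (s * q) = q := Ring.inverse_mul_cancel_left s q hs
  have hc : s * (Ring.inverse s * c) = c := Ring.mul_inverse_cancel_left s c hs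
  rw [mul_add (Ring.inverse s), hq, add_mul, mul_add, mul_add, mul_assoc p, mul_assoc p, hc]
  abel

theorem stmt13 {V : Type*} [NormedAddCommGroup V] [InnerProductSpace ℂ V]
    [FiniteDimensional ℂ V]
    (Cε Cα Cm Dε Dα Dm : V →L[ℂ] V)
    (hCε : IsSelfAdjoint Cε) (hCα : IsSelfAdjoint Cα) (hCm : IsSelfAdjoint Cm)
    (hDε : IsSelfAdjoint Dε) (hDα : IsSelfAdjoint Dα) (hDm : IsSelfAdjoint Dm)
    (hCαpos : ∀ x : V, x ≠ 0 → 0 < (⟪Cα x, x⟫).re)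
    (hDαpos : ∀ x : V, x ≠ 0 → 0 < (⟪Dα x, x⟫).re)
    (ω : ℝ) :
    IsUnit (Cα - (Complex.I * (ω : ℂ)) • Dα) ∧
      Cfreq Cε Cα Cm Dε Dα Dm ω =
        CInst Cε Cα Cm Dα Dm - (Complex.I * (ω : ℂ)) • DInst Dε Dα Dm -
          ContinuousLinearMap.adjoint (Chat Cα Cm Dα Dm) ∘L
            Ring.inverse (Cα - (Complex.I * (ω : ℂ)) • Dα) ∘L Chat Cα Cm Dα Dm := by
  have hS : IsUnit (Cα - (Complex.I * (ω : ℂ)) • Dα) :=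
    ContinuousLinearMap.isUnit_of_re_inner_pos _ fun x hx => by
      rw [re_inner_sub_I_mul_smul Cα Dα hDα]
      exact hCαpos x hx
  have hA : IsUnit Cα := ContinuousLinearMap.isUnit_of_re_inner_pos _ hCαpos
  have hD : IsUnit Dα := ContinuousLinearMap.isUnit_of_re_inner_pos _ hDαpos
  refine ⟨hS, ?_⟩
  have hadj : ContinuousLinearMap.adjoint (Chat Cα Cm Dα Dm) =
      Cm - Dm * Ring.inverse Dα * Cα := by
    have hDinv : star (Ring.inverse Dα) = Ring.inverse Dα := by
      rw [← Ring.inverse_star, hDα.star_eq]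
    change star (Cm - Cα * (Ring.inverse Dα * Dm)) = _
    rw [star_sub, star_mul, star_mul, hDinv, hCα.star_eq, hCm.star_eq, hDm.star_eq]
  simp only [Cfreq, CInst, DInst, hadj]
  simp only [Chat, ← ContinuousLinearMap.mul_def]
  set z : ℂ := Complex.I * (ω : ℂ)
  set p := Dm * Ring.inverse Dα
  set q := Ring.inverse Dα * Dm
  have hpD : p * Dα = Dm := Ring.inverse_mul_cancel_right Dα Dm hD
  have hDq : Dα * q = Dm := Ring.mul_inverse_cancel_left Dα Dm hD
  have hleft : Cm - z • Dm = Cm - p * Cα + p * (Cα - z • Dα) := by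
    rw [mul_sub, mul_smul_comm, hpD]
    abel
  have hright : Cm - z • Dm = Cm - Cα * q + (Cα - z • Dα) * q := by
    rw [sub_mul, smul_mul_assoc, hDq]
    abel
  have hfreq := add_mul_mul_inverse_mul_add_mul hS (Cm - p * Cα) (Cm - Cα * q) p q
  have hstatic := add_mul_mul_inverse_mul_add_mul hA (Cm - p * Cα) (Cm - Cα * q) p q
  rw [← hleft, ← hright] at hfreq
  rw [sub_add_cancel, sub_add_cancel] at hstatic
  have hshift : p * ((Cα - z • Dα) * q) = p * (Cα * q) - z • (Dm * q) := by
    rw [sub_mul, mul_sub, smul_mul_assoc, mul_smul_comm, ← mul_assoc p Dα, hpD]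
  rw [hfreq, hstatic, hshift, smul_sub]
  abel
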